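/- Let f_1,…,f_n : ℝ → ℝ be (n−1)-times continuously differentiable. Then the function x ↦ det[f_i(x_j)]_{i,j=1}^n/Δ_n(x), defined on points of ℝ^n with pairwise distinct coordinates, extends continuously to ℝ^n, and its value at the diagonal point (x,…,x) equals c_n · det[f_i^{(n−j)}(x)]_{i,j=1}^n, where f_i^{(m)} denotes the m-th derivative of f_i. In particular, in this case the generalized Wronskian W(f_1,…,f_n)(x) equals det[f_i^{(n−j)}(x)]_{i,j=1}^n, the classical Wronskian determinant. -/

import Mathlib

open Finset

/-- Vandermonde determinant Δ_n(x) = ∏_{i<j} (x_i - x_j). -/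
noncomputable def vdm {n : ℕ} (x : Fin n → ℝ) : ℝ :=
  ∏ i, ∏ j ∈ Finset.Ioi i, (x i - x j)

/-- f_1 ∧ ⋯ ∧ f_n (x) = det [f_i(x_j)]. -/
noncomputable def wedge {n : ℕ} (f : Fin n → ℝ → ℝ) (x : Fin n → ℝ) : ℝ :=
  Matrix.det (Matrix.of fun i j => f i (x j))

/-- `F` is a continuous extension to ℝ^n of the ratio (f_1∧⋯∧f_n)/Δ_n, which is
defined on points with pairwise distinct coordinates. -/
def ExtendsRatio {n : ℕ} (f : Fin n → ℝ → ℝ) (F : (Fin n → ℝ) → ℝ) : Prop :=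
  Continuous F ∧ ∀ x : Fin n → ℝ, Function.Injective x → F x = wedge f x / vdm x

/-- c_n⁻¹ = ∏_{i=1}^{n-1} i!. -/
noncomputable def cInv (n : ℕ) : ℝ := ∏ i ∈ Finset.range n, (Nat.factorial i : ℝ)

/-- Divided differences along a sequence of nodes. -/
noncomputable def divDiff : ℕ → (ℝ → ℝ) → (ℕ → ℝ) → ℝ
  | 0, f, x => f (x 0)
  | k + 1, f, x => divDiff k (dslope f (x 0)) (fun m => x (m + 1))

/-- Newton's interpolation formula at the nodes. -/
theorem newton_formula (j : ℕ) : ∀ (N : ℕ) (_ : j ≤ N) (f : ℝ → ℝ) (y : ℕ → ℝ),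
    f (y j) = ∑ k ∈ range (N + 1), divDiff k f y * ∏ l ∈ range k, (y j - y l) := by
  induction j with
  | zero =>
    intro N _ f y
    rw [Finset.sum_range_succ']
    rw [Finset.sum_eq_zero]
    · simp [divDiff]
    · intro k _
      rw [Finset.prod_range_succ']
      simp
  | succ j ih =>
    intro N hN f y
    obtain ⟨M, rfl⟩ : ∃ M, N = M + 1 := ⟨N - 1, by omega⟩
    rw [Finset.sum_range_succ']
    have h1 := sub_smul_dslope f (y 0) (y (j + 1))
    have h2 := ih M (by omega) (dslope f (y 0)) (fun m => y (m + 1))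
    rw [h2, smul_eq_mul, Finset.mul_sum] at h1
    simp only [Finset.prod_range_zero, mul_one, divDiff]
    rw [← sub_eq_iff_eq_add, ← h1]
    apply Finset.sum_congr rfl
    intro k _
    rw [Finset.prod_range_succ']
    ring

/-- A family of functions with jointly continuous derivatives `D 0, …, D m`. -/
def GoodFam {P : Type} [TopologicalSpace P] (m : ℕ) (D : ℕ → P → ℝ → ℝ) : Prop :=
  (∀ j ≤ m, Continuous (fun q : P × ℝ => D j q.1 q.2)) ∧
    ∀ j < m, ∀ p y, HasDerivAt (D j p) (D (j + 1) p y) y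

/-- The derivatives of the divided difference family. -/
noncomputable def stepFam {P : Type} (D : ℕ → P → ℝ → ℝ) (j : ℕ) (q : P × ℝ) (y : ℝ) : ℝ :=
  ∫ t in (0 : ℝ)..1, t ^ j * D (j + 1) q.1 (q.2 + t * (y - q.2))

theorem GoodFam.step {P : Type} [TopologicalSpace P] [FirstCountableTopology P] {m : ℕ}
    {D : ℕ → P → ℝ → ℝ} (h : GoodFam (m + 1) D) : GoodFam m (stepFam D) := by
  refine ⟨fun j hj => ?_, fun j hj q y => ?_⟩
  · unfold stepFam
    have hc := h.1 (j + 1) (by omega)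
    apply intervalIntegral.continuous_parametric_intervalIntegral_of_continuous'
    have h2 : Continuous (fun r : ((P × ℝ) × ℝ) × ℝ =>
      ((r.1.1.1, r.1.1.2 + r.2 * (r.1.2 - r.1.1.2)) : P × ℝ)) := by fun_prop
    have h3 := hc.comp h2
    exact (continuous_snd.pow j).mul h3
  · obtain ⟨p, a⟩ := q
    unfold stepFam
    simp only
    have hc : ∀ i ≤ m + 1, ∀ l : ℕ,
        Continuous (fun r : ℝ × ℝ => r.2 ^ l * D i p (a + r.2 * (r.1 - a))) := by
      intro i hi l
      have h2 : Continuous (fun r : ℝ × ℝ => ((p, a + r.2 * (r.1 - a)) : P × ℝ)) := by fun_prop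
      exact (continuous_snd.pow l).mul ((h.1 i hi).comp h2)
    have hc' : ∀ i ≤ m + 1, ∀ l : ℕ, ∀ z : ℝ,
        Continuous (fun t : ℝ => t ^ l * D i p (a + t * (z - a))) := by
      intro i hi l z
      exact (hc i hi l).comp (show Continuous (fun t : ℝ => (z, t)) by fun_prop)
    obtain ⟨C, hC⟩ := ((isCompact_closedBall y (1 : ℝ)).prod
      (isCompact_Icc (a := (0 : ℝ)) (b := 1))).exists_bound_of_continuousOn
      (hc (j + 2) (by omega) (j + 1)).continuousOn
    refine (intervalIntegral.hasDerivAt_integral_of_dominated_loc_of_deriv_le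
      (F := fun z t => t ^ j * D (j + 1) p (a + t * (z - a)))
      (F' := fun z t => t ^ (j + 1) * D (j + 2) p (a + t * (z - a)))
      (bound := fun _ => C) (s := Metric.closedBall y 1)
      (Metric.closedBall_mem_nhds y one_pos) ?_ ?_ ?_ ?_ ?_ ?_).2
    · exact Filter.Eventually.of_forall fun z =>
        (hc' (j + 1) (by omega) j z).aestronglyMeasurable
    · exact (hc' (j + 1) (by omega) j y).intervalIntegrable _ _
    · exact (hc' (j + 2) (by omega) (j + 1) y).aestronglyMeasurable
    · refine Filter.Eventually.of_forall fun t ht z hz => ?_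
      rw [Set.uIoc_of_le zero_le_one] at ht
      exact hC (z, t) ⟨hz, ht.1.le, ht.2⟩
    · exact intervalIntegrable_const
    · refine Filter.Eventually.of_forall fun t _ z _ => ?_
      have h1 : HasDerivAt (fun z : ℝ => a + t * (z - a)) t z := by
        simpa using (((hasDerivAt_id z).sub_const a).const_mul t).const_add a
      have h2 := ((h.2 (j + 1) (by omega) p (a + t * (z - a))).comp z h1).const_mul (t ^ j)
      exact h2.congr_deriv (by ring)

theorem GoodFam.dslope_eq {P : Type} [TopologicalSpace P] {m : ℕ}
    {D : ℕ → P → ℝ → ℝ} (h : GoodFam (m + 1) D) (p : P) (a : ℝ) :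
    dslope (D 0 p) a = stepFam D 0 (p, a) := by
  funext y
  by_cases hy : y = a
  · subst hy
    simp [stepFam, (h.2 0 (by omega) p y).deriv]
  · rw [dslope_of_ne _ hy, slope_def_field, div_eq_iff (sub_ne_zero.2 hy)]
    have := intervalIntegral.integral_unitInterval_deriv_eq_sub (f := D 0 p) (f' := D 1 p)
      (z₀ := a) (z₁ := y - a) (by
        have h2 : Continuous (fun t : ℝ => ((p, a + t • (y - a)) : P × ℝ)) := by fun_prop
        exact ((h.1 1 (by omega)).comp h2).continuousOn)
      (fun t _ => h.2 0 (by omega) p _)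
    simp only [smul_eq_mul, add_sub_cancel] at this
    rw [← this]
    simp [stepFam, mul_comm]

theorem stepFam_diag {P : Type} (D : ℕ → P → ℝ → ℝ) (j : ℕ) (p : P) (a : ℝ) :
    stepFam D j (p, a) a = D (j + 1) p a / (j + 1) := by
  simp [stepFam, div_eq_inv_mul]

theorem GoodFam.continuous_divDiff (k : ℕ) : ∀ {P : Type} [TopologicalSpace P]
    [FirstCountableTopology P] {D : ℕ → P → ℝ → ℝ}, GoodFam k D →
    Continuous (fun q : P × (ℕ → ℝ) => divDiff k (D 0 q.1) q.2) := by
  induction k with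
  | zero =>
    intro P _ _ D h
    simp only [divDiff]
    exact (h.1 0 le_rfl).comp
      (show Continuous (fun q : P × (ℕ → ℝ) => (q.1, q.2 0)) by fun_prop)
  | succ k ih =>
    intro P _ _ D h
    simp only [divDiff, h.dslope_eq]
    exact (ih h.step).comp (show Continuous (fun q : P × (ℕ → ℝ) =>
      (((q.1, q.2 0), fun m => q.2 (m + 1)) : (P × ℝ) × (ℕ → ℝ))) by fun_prop)

theorem GoodFam.divDiff_diag (k : ℕ) : ∀ {P : Type} [TopologicalSpace P]
    [FirstCountableTopology P] {D : ℕ → P → ℝ → ℝ}, GoodFam k D → ∀ p a,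
    divDiff k (D 0 p) (fun _ => a) = D k p a / k.factorial := by
  induction k with
  | zero =>
    intro P _ _ D h p a
    simp [divDiff]
  | succ k ih =>
    intro P _ _ D h p a
    simp only [divDiff, h.dslope_eq]
    rw [ih h.step, stepFam_diag, Nat.factorial_succ, div_div]
    push_cast
    rfl

theorem goodFam_iteratedDeriv {k N : ℕ} (hk : k ≤ N) {f : ℝ → ℝ}
    (hf : ContDiff ℝ (N : ℕ∞) f) :
    GoodFam k (fun j (_ : Unit) => iteratedDeriv j f) := by
  refine ⟨fun j hj => ?_, fun j hj _ y => ?_⟩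
  · exact (hf.continuous_iteratedDeriv j (by exact_mod_cast hj.trans hk)).comp continuous_snd
  · have := hf.differentiable_iteratedDeriv j (by exact_mod_cast hj.trans_le hk)
    simp only [iteratedDeriv_succ]
    exact (this y).hasDerivAt

/-- Reversed extension of a point of `ℝ^n` to a sequence. -/
def revSeq {n : ℕ} (hn : 1 ≤ n) (x : Fin n → ℝ) (m : ℕ) : ℝ := x ⟨n - 1 - m, by omega⟩

theorem wedge_eq {n : ℕ} (hn : 1 ≤ n) (f : Fin n → ℝ → ℝ) (x : Fin n → ℝ) :
    wedge f x = vdm x *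
      Matrix.det (Matrix.of fun i j : Fin n => divDiff (n - 1 - (j : ℕ)) (f i) (revSeq hn x)) := by
  have hU : vdm x = Matrix.det (Matrix.of fun k j : Fin n =>
      ∏ l ∈ Finset.Ioi k, (x j - x l)) := by
    rw [Matrix.det_of_isLowerTriangular]
    · rfl
    · intro k j hkj
      simp only [Matrix.of_apply]
      exact Finset.prod_eq_zero (Finset.mem_Ioi.2 hkj) (sub_self _)
  rw [hU, mul_comm, ← Matrix.det_mul]
  unfold wedge
  congr 1
  ext i j
  simp only [Matrix.of_apply, Matrix.mul_apply]
  have h1 := newton_formula (n - 1 - (j : ℕ)) (n - 1) (by omega) (f i) (revSeq hn x)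
  have hj : ∀ j : Fin n, revSeq hn x (n - 1 - (j : ℕ)) = x j := by
    intro j
    unfold revSeq
    congr 1
    ext
    simp only
    omega
  rw [hj, Nat.sub_add_cancel hn, ← Finset.sum_range_reflect] at h1
  rw [h1, ← Fin.sum_univ_eq_sum_range (fun k => divDiff (n - 1 - k) (f i) (revSeq hn x) *
    ∏ l ∈ range (n - 1 - k), (x j - revSeq hn x l))]
  refine Finset.sum_congr rfl fun k _ => ?_
  congr 1
  symm
  refine Finset.prod_bij (fun l _ => n - 1 - (l : ℕ)) ?_ ?_ ?_ ?_
  · intro l hl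
    have : k < l := Finset.mem_Ioi.1 hl
    rw [Fin.lt_def] at this
    simp only [Finset.mem_range]
    omega
  · intro a _ b _ hab
    ext
    omega
  · intro b hb
    simp only [Finset.mem_range] at hb
    refine ⟨⟨n - 1 - b, by omega⟩, ?_, ?_⟩
    · rw [Finset.mem_Ioi, Fin.lt_def]
      simp only
      omega
    · simp only
      omega
  · intro l _
    rw [hj]

theorem vdm_ne_zero {n : ℕ} (x : Fin n → ℝ) (hx : Function.Injective x) : vdm x ≠ 0 := by
  unfold vdm
  refine Finset.prod_ne_zero_iff.2 fun i _ => Finset.prod_ne_zero_iff.2 fun j hj => ?_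
  rw [Finset.mem_Ioi] at hj
  exact sub_ne_zero.2 fun h => hj.ne (hx h)

theorem cInv_ne_zero (n : ℕ) : cInv n ≠ 0 :=
  Finset.prod_ne_zero_iff.2 fun i _ => by exact_mod_cast i.factorial_ne_zero

/-- For (n−1)-times continuously differentiable `f_1,…,f_n`, the ratio
det[f_i(x_j)]/Δ_n(x) extends continuously to ℝ^n, its value on the diagonal is
`c_n · det[f_i^{(n−j)}(x)]`, and hence the generalized Wronskian agrees with the
classical Wronskian determinant `det[f_i^{(n−j)}(x)]`. -/
theorem generalized_wronskian_eq_classical (n : ℕ) (hn : 1 ≤ n)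
    (f : Fin n → ℝ → ℝ)
    (hf : ∀ i, ContDiff ℝ ((n - 1 : ℕ) : ℕ∞) (f i)) :
    ∃ F : (Fin n → ℝ) → ℝ, ExtendsRatio f F ∧
      (∀ x : ℝ, F (fun _ => x) =
        (cInv n)⁻¹ *
          Matrix.det (Matrix.of fun i j : Fin n =>
            iteratedDeriv (n - 1 - (j : ℕ)) (f i) x)) ∧
      (∀ x : ℝ, cInv n * F (fun _ => x) =
        Matrix.det (Matrix.of fun i j : Fin n =>
          iteratedDeriv (n - 1 - (j : ℕ)) (f i) x)) := by
  have hgood : ∀ (i j : Fin n), GoodFam (n - 1 - (j : ℕ))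
      (fun k (_ : Unit) => iteratedDeriv k (f i)) :=
    fun i j => goodFam_iteratedDeriv (by omega) (hf i)
  have hdiag : ∀ x : ℝ, Matrix.det (Matrix.of fun i j : Fin n =>
        divDiff (n - 1 - (j : ℕ)) (f i) (revSeq hn fun _ => x)) =
      (cInv n)⁻¹ * Matrix.det (Matrix.of fun i j : Fin n =>
            iteratedDeriv (n - 1 - (j : ℕ)) (f i) x) := by
    intro x
    have hc : (cInv n)⁻¹ = ∏ j : Fin n, ((n - 1 - (j : ℕ)).factorial : ℝ)⁻¹ := by
      rw [Finset.prod_inv_distrib,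
        Fin.prod_univ_eq_prod_range (fun j => ((n - 1 - j).factorial : ℝ)),
        Finset.prod_range_reflect (fun j => (j.factorial : ℝ))]
      rfl
    rw [hc, ← Matrix.det_mul_row]
    congr 1
    ext i j
    have := (hgood i j).divDiff_diag _ () x
    simp only [iteratedDeriv_zero] at this
    simp only [Matrix.of_apply]
    rw [← div_eq_inv_mul, ← this]
    rfl
  refine ⟨fun x => Matrix.det (Matrix.of fun i j : Fin n =>
    divDiff (n - 1 - (j : ℕ)) (f i) (revSeq hn x)), ⟨?_, ?_⟩, hdiag, ?_⟩
  · refine Continuous.matrix_det (continuous_matrix fun i j => ?_)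
    have h1 := (hgood i j).continuous_divDiff
    simp only [iteratedDeriv_zero] at h1
    have h2 : Continuous (fun x : Fin n → ℝ => (((), revSeq hn x) : Unit × (ℕ → ℝ))) := by
      unfold revSeq
      fun_prop
    exact h1.comp h2
  · intro x hx
    rw [wedge_eq hn, mul_div_cancel_left₀ _ (vdm_ne_zero x hx)]
  · intro x
    simp only [hdiag]
    rw [mul_inv_cancel_left₀ (cInv_ne_zero n)]
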